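/- arXiv:math/0605002 — 2 statements merged into one kernel-verified Lean document; each statement's English description precedes it below -/
import Mathlib

section
/- There exists a constant C > 0 with the following property: for every n ≥ 2 and every α ∈ (0,1/2) there is δ₀ > 0 such that for every δ ∈ (0,δ₀) and every α-porous subset S of the unit sphere Y = ∂X ⊆ ℝⁿ, the closed δ-neighborhood S_δ := {y ∈ Y : dist(y,S) ≤ δ} satisfies ω_∞(S_δ) ≤ δ^{α^C}, where ω_∞ denotes the ∞-harmonic measure from the center 0 of the unit ball. -/
open Metric Set

noncomputable section

/-- Euclidean space `ℝⁿ`. -/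
abbrev Euc (n : ℕ) := EuclideanSpace ℝ (Fin n)

/-- The (possibly infinite) Lipschitz constant of `u` on `S`:
`Lip_S u = sup {|u x - u y| / ‖x - y‖ : x, y ∈ S, x ≠ y}`. -/
def lipOn {X : Type*} [MetricSpace X] (u : X → ℝ) (S : Set X) : ENNReal :=
  ⨆ (x : X) (_ : x ∈ S) (y : X) (_ : y ∈ S) (_ : x ≠ y),
    ENNReal.ofReal (|u x - u y| / dist x y)

/-- The `∞`-harmonic measure of `A` from the center `0` of the closed unit ball
`X` of `ℝⁿ` (with `Y = ∂X` the unit sphere): the infimum of `u 0` over nonnegative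
functions `u` that are Lipschitz on `X`, absolutely minimal on `X \ Y` (i.e.
`Lip_V u = Lip_{∂V} u` for every open `V` contained in the open unit ball), and
satisfy `u ≥ 1` on `A`. -/
def omegaInf (n : ℕ) (A : Set (Euc n)) : ℝ :=
  sInf {t : ℝ | ∃ u : Euc n → ℝ,
    (∀ x ∈ closedBall (0 : Euc n) 1, 0 ≤ u x) ∧
    (∃ K : NNReal, LipschitzOnWith K u (closedBall (0 : Euc n) 1)) ∧
    (∀ V : Set (Euc n), IsOpen V → V ⊆ ball (0 : Euc n) 1 →
      lipOn u V = lipOn u (frontier V)) ∧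
    (∀ x ∈ A, 1 ≤ u x) ∧ t = u 0}

/-- `S` is `α`-porous in `Z`: for every radius `r ∈ (0, diam Z)`, every ball of radius `r`
in `Z` contains a ball of radius `α r` (in `Z`) disjoint from `S`. -/
def IsPorousIn {X : Type*} [MetricSpace X] (α : ℝ) (S Z : Set X) : Prop :=
  ∀ r : ℝ, 0 < r → r < diam Z → ∀ z ∈ Z, ∃ z' ∈ Z,
    (ball z' (α * r) ∩ Z ⊆ ball z r) ∧ (ball z' (α * r) ∩ S = ∅)

/-
The competitor for the `∞`-harmonic measure is the Perron extension `u` of a Lipschitz bump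
equal to `1` on `S_δ` and to `0` at distance at least `2δ` from `S`. It is the largest function
with these boundary values that satisfies comparison with cones from above (and a lower bound
forcing it to be Lipschitz); maximality gives comparison with cones from below, and the two
comparisons together give absolute minimality.

Decay: suppose `u ≤ M` at distance at least `r` from `S`. Comparison with cones gives
`(M - u y) / 2 ≤ M - u x` whenever `dist x y ≤ s / 2` and the ball of radius `s` about `y` stays at
distance at least `r` from `S`. By porosity every `x` at distance at least `64 r / α` from `S` is
joined to a boundary zero of `u` by a chain of `O(log (1 / α))` such balls, so
`u x ≤ (1 - α ^ 26) M`. Iterating over the roughly `log (1 / δ) / log (64 / α)` scales between `2δ`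
and `1` bounds `u 0` by a power of `δ`.
-/

open scoped NNReal

section Topology

variable {X : Type*} [TopologicalSpace X]

lemma frontier_diff_singleton_subset [T1Space X] (V : Set X) (y : X) :
    frontier (V \ {y}) ⊆ insert y (frontier V) := by
  intro x hx
  rcases frontier_inter_subset V {y}ᶜ hx with h | h
  · exact Or.inr h.1
  · rw [frontier_compl] at h
    exact Or.inl (isClosed_singleton.frontier_subset h.2)

lemma eq_of_mem_frontier_inter_lt {W : Set X} {f g : X → ℝ} (hf : Continuous f)
    (hg : Continuous g) (h : ∀ x ∈ frontier W, g x ≤ f x) {x : X}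
    (hx : x ∈ frontier (W ∩ {y | f y < g y})) : f x = g x := by
  rcases frontier_inter_subset _ _ hx with hx | hx
  · exact le_antisymm (closure_lt_subset_le hf hg hx.2) (h x hx.1)
  · exact frontier_lt_subset_eq hf hg hx.2

lemma notMem_of_mem_frontier {U : Set X} (hU : IsOpen U) {x : X} (hx : x ∈ frontier U) : x ∉ U :=
  (disjoint_frontier_iff_isOpen.2 hU).notMem_of_mem_left hx

end Topology

section ComparisonWithCones

variable {X : Type*} [MetricSpace X] {U V W : Set X} {u v : X → ℝ}

/-- Comparison with cones from above: on open subsets of `U`, the function `u` lies below every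
cone that dominates it on the boundary and whose vertex is outside the subset. Only cones of slope
`b ≥ 0` are tested. Comparison from below for `u` is comparison from above for `-u`. -/
def ComparesWithConesAbove (U : Set X) (u : X → ℝ) : Prop :=
  ∀ W ⊆ U, IsOpen W → ∀ z ∉ W, ∀ a b : ℝ, 0 ≤ b →
    (∀ x ∈ frontier W, u x ≤ a + b * dist x z) → ∀ x ∈ W, u x ≤ a + b * dist x z

namespace ComparesWithConesAbove

protected lemma iSup {ι : Type*} [Nonempty ι] {v : ι → X → ℝ}
    (hv : ∀ i, ComparesWithConesAbove U (v i)) (hbdd : ∀ x, BddAbove (range fun i => v i x)) :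
    ComparesWithConesAbove U (fun x => ⨆ i, v i x) :=
  fun W hWU hW z hz a b hb h x hx => ciSup_le fun i =>
    hv i W hWU hW z hz a b hb (fun y hy => (le_ciSup (hbdd y) i).trans (h y hy)) x hx

lemma le_of_frontier_le (hu : ComparesWithConesAbove U u) (hU : IsOpen U) (hne : U ≠ univ)
    {a : ℝ} (h : ∀ x ∈ frontier U, u x ≤ a) {x : X} (hx : x ∈ U) : u x ≤ a := by
  obtain ⟨z, hz⟩ := (ne_univ_iff_exists_notMem U).1 hne
  simpa using hu U subset_rfl hU z hz a 0 le_rfl (by simpa using h) x hx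

lemma le_add_mul_dist (hu : ComparesWithConesAbove U u) (hV : IsOpen V) (hVU : V ⊆ U) {y : X}
    {b : ℝ} (hb : 0 ≤ b) (h : ∀ w ∈ frontier V, u w ≤ u y + b * dist w y) {x : X} (hx : x ∈ V) :
    u x ≤ u y + b * dist x y := by
  rcases eq_or_ne x y with rfl | hxy
  · simp
  refine hu (V \ {y}) (sdiff_subset.trans hVU) (hV.sdiff isClosed_singleton) y (by simp) (u y) b hb
    (fun w hw => ?_) x ⟨hx, hxy⟩
  rcases frontier_diff_singleton_subset V y hw with rfl | hw
  · simp
  · exact h w hw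

lemma piecewise [∀ x, Decidable (x ∈ W)] (hu : ComparesWithConesAbove U u)
    (hv : ComparesWithConesAbove W v) (hW : IsOpen W) (hle : ∀ x ∈ W, u x ≤ v x)
    (heq : ∀ x ∈ frontier W, u x = v x) : ComparesWithConesAbove U (W.piecewise v u) := by
  have hle_glued : ∀ x, u x ≤ W.piecewise v u x := fun x => by
    by_cases hx : x ∈ W
    · simpa only [piecewise_eq_of_mem _ _ _ hx] using hle x hx
    · rw [piecewise_eq_of_notMem _ _ _ hx]
  have hv_closure : ∀ x ∈ closure W, v x ≤ W.piecewise v u x := fun x hx => by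
    by_cases hxW : x ∈ W
    · rw [piecewise_eq_of_mem _ _ _ hxW]
    · rw [← heq x (hW.frontier_eq ▸ ⟨hx, hxW⟩)]
      exact hle_glued x
  intro V hVU hV z hz a b hb h x hx
  have huV : ∀ y ∈ V, u y ≤ a + b * dist y z :=
    hu V hVU hV z hz a b hb fun y hy => (hle_glued y).trans (h y hy)
  by_cases hxW : x ∈ W
  · rw [piecewise_eq_of_mem _ _ _ hxW]
    refine hv (V ∩ W) inter_subset_right (hV.inter hW) z (fun hz' => hz hz'.1) a b hb
      (fun y hy => ?_) x ⟨hx, hxW⟩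
    rw [(hV.inter hW).frontier_eq] at hy
    have hyW : y ∈ closure W := closure_mono inter_subset_right hy.1
    by_cases hyV : y ∈ V
    · rw [← heq y (hW.frontier_eq ▸ ⟨hyW, fun hyW' => hy.2 ⟨hyV, hyW'⟩⟩)]
      exact huV y hyV
    · have hyf : y ∈ frontier V :=
        hV.frontier_eq ▸ ⟨closure_mono inter_subset_left hy.1, hyV⟩
      exact (hv_closure y hyW).trans (h y hyf)
  · rw [piecewise_eq_of_notMem _ _ _ hxW]
    exact huV x hx

lemma le_add_div_mul_dist (hu : ComparesWithConesAbove U u) (hU : IsOpen U) {x y : X} {s M : ℝ}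
    (hs : 0 < s) (hM : ∀ w ∈ closure U, dist w y ≤ s → u w ≤ M)
    (hfr : ∀ w ∈ frontier U, dist w y ≤ s → u w ≤ u y) (hy : y ∈ closure U)
    (hx : x ∈ closure U) (hxy : dist x y ≤ s) :
    u x ≤ u y + (M - u y) / s * dist x y := by
  have hslope : 0 ≤ (M - u y) / s :=
    div_nonneg (sub_nonneg.2 (hM y hy (by simpa using hs.le))) hs.le
  have houtside : ∀ w ∈ closure U, dist w y ≤ s → w ∉ U ∩ ball y s →
      u w ≤ u y + (M - u y) / s * dist w y := by
    intro w hw hwy hwV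
    by_cases hwU : w ∈ U
    · have hws : dist w y = s := hwy.antisymm (not_lt.1 fun hlt => hwV ⟨hwU, hlt⟩)
      rw [hws, div_mul_cancel₀ _ hs.ne', add_sub_cancel]
      exact hM w hw hwy
    · exact (hfr w (hU.frontier_eq ▸ ⟨hw, hwU⟩) hwy).trans
        (le_add_of_nonneg_right (mul_nonneg hslope dist_nonneg))
  by_cases hxV : x ∈ U ∩ ball y s
  · have hV : IsOpen (U ∩ ball y s) := hU.inter isOpen_ball
    refine hu.le_add_mul_dist hV inter_subset_left hslope (fun w hw => ?_) hxV
    rw [hV.frontier_eq] at hw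
    exact houtside w (closure_mono inter_subset_left hw.1)
      (closure_ball_subset_closedBall (closure_mono inter_subset_right hw.1)) hw.2
  · exact houtside x hx hxy hxV

lemma half_sub_le_sub (hu : ComparesWithConesAbove U u) (hU : IsOpen U) {x y : X} {s M : ℝ}
    (hs : 0 < s) (hM : ∀ w ∈ closure U, dist w y ≤ s → u w ≤ M)
    (hfr : ∀ w ∈ frontier U, dist w y ≤ s → u w ≤ u y) (hy : y ∈ closure U)
    (hx : x ∈ closure U) (hxy : dist x y ≤ s / 2) : (M - u y) / 2 ≤ M - u x := by
  have hcone := hu.le_add_div_mul_dist hU hs hM hfr hy hx (by linarith)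
  have hMy : 0 ≤ M - u y := sub_nonneg.2 (hM y hy (by simpa using hs.le))
  have hhalf : (M - u y) / s * dist x y ≤ (M - u y) / 2 :=
    calc (M - u y) / s * dist x y ≤ (M - u y) / s * (s / 2) := by gcongr
      _ = (M - u y) / 2 := by field_simp
  linarith

lemma half_sub_le_sub_of_closedBall_subset (hu : ComparesWithConesAbove U u) (hU : IsOpen U)
    {x y : X} {s M : ℝ} (hs : 0 < s) (hsub : closedBall y s ⊆ U)
    (hM : ∀ w ∈ closedBall y s, u w ≤ M) (hxy : dist x y ≤ s / 2) :
    (M - u y) / 2 ≤ M - u x :=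
  hu.half_sub_le_sub hU hs (fun w _ hwy => hM w hwy)
    (fun _ hw hwy => absurd (hsub hwy) (notMem_of_mem_frontier hU hw))
    (subset_closure (hsub (mem_closedBall_self hs.le)))
    (subset_closure (hsub (mem_closedBall.2 (by linarith)))) hxy

lemma lipschitzOnWith_of_frontier (hu : ComparesWithConesAbove U u)
    (hneg : ComparesWithConesAbove U (-u)) (hV : IsOpen V) (hVU : V ⊆ U) {K : ℝ≥0}
    (hK : LipschitzOnWith K u (frontier V)) : LipschitzOnWith K u V := by
  refine LipschitzOnWith.of_le_add_mul K fun x hx y hy =>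
    hu.le_add_mul_dist hV hVU K.coe_nonneg (fun w hw => ?_) hx
  have hbelow := hneg V hVU hV w (notMem_of_mem_frontier hV hw) (-u w) K K.coe_nonneg
    (fun q hq => by
      have := hK.le_add_mul hw hq
      rw [dist_comm] at this
      simp only [Pi.neg_apply]
      linarith) y hy
  rw [dist_comm, Pi.neg_apply] at hbelow
  linarith

end ComparesWithConesAbove

lemma lipOn_le_coe_iff {S : Set X} {K : ℝ≥0} : lipOn u S ≤ K ↔ LipschitzOnWith K u S := by
  simp only [lipOn, iSup_le_iff, lipschitzOnWith_iff_dist_le_mul, Real.dist_eq]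
  refine forall₄_congr fun x _ y _ => ?_
  rcases eq_or_ne x y with rfl | hxy
  · simp
  · rw [ENNReal.ofReal_le_coe, div_le_iff₀ (dist_pos.2 hxy)]
    simp [hxy]

lemma lipOn_le_lipOn {S T : Set X}
    (h : ∀ K : ℝ≥0, LipschitzOnWith K u T → LipschitzOnWith K u S) : lipOn u S ≤ lipOn u T := by
  by_cases htop : lipOn u T = ⊤
  · exact htop ▸ le_top
  · lift lipOn u T to ℝ≥0 using htop with K hK
    exact lipOn_le_coe_iff.2 (h K (lipOn_le_coe_iff.1 hK.ge))

/-- The absolutely minimal (AM) functions on an open set `U`. -/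
def IsAbsolutelyMinimalOn (U : Set X) (u : X → ℝ) : Prop :=
  ∀ V : Set X, IsOpen V → V ⊆ U → lipOn u V = lipOn u (frontier V)

lemma ComparesWithConesAbove.isAbsolutelyMinimalOn (hu : ComparesWithConesAbove U u)
    (hneg : ComparesWithConesAbove U (-u)) (hc : Continuous u) : IsAbsolutelyMinimalOn U u :=
  fun _ hV hVU => le_antisymm
    (lipOn_le_lipOn fun _ => hu.lipschitzOnWith_of_frontier hneg hV hVU)
    (lipOn_le_lipOn fun _ hK => (hK.closure hc.continuousOn).mono frontier_subset_closure)

end ComparisonWithCones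

section Perron

variable {X : Type*} [MetricSpace X] {U : Set X} {f u : X → ℝ} {K : ℝ≥0}

/-- The Perron class of the boundary values `f` on the complement of `U`: functions that satisfy
comparison with cones from above in `U`, agree with `f` off `U`, and lie above the cones
of slope `-K` issuing from the boundary data. The last condition makes every member
`K`-Lipschitz. -/
def perronClass (U : Set X) (f : X → ℝ) (K : ℝ≥0) : Set (X → ℝ) :=
  {v | ComparesWithConesAbove U v ∧ EqOn v f Uᶜ ∧ ∀ x, ∀ z ∉ U, f z - K * dist x z ≤ v x}

lemma lipschitzWith_of_mem_perronClass (hU : IsOpen U) (hu : u ∈ perronClass U f K) :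
    LipschitzWith K u := by
  obtain ⟨hcone, heq, hlow⟩ := hu
  have houtside : ∀ x ∉ U, ∀ y, u x ≤ u y + K * dist x y := by
    intro x hx y
    have := hlow y x hx
    rw [heq hx, dist_comm]
    linarith
  refine LipschitzWith.of_le_add_mul K fun x y => ?_
  by_cases hx : x ∈ U
  · exact hcone.le_add_mul_dist hU subset_rfl K.coe_nonneg
      (fun w hw => houtside w (notMem_of_mem_frontier hU hw) y) hx
  · exact houtside x hx y

lemma isGreatest_iSup_perronClass (hU : IsOpen U) (hne : U ≠ univ)
    (hP : (perronClass U f K).Nonempty) :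
    IsGreatest (perronClass U f K) (fun x => ⨆ v : perronClass U f K, v.1 x) := by
  obtain ⟨z₀, hz₀⟩ := (ne_univ_iff_exists_notMem U).1 hne
  have : Nonempty (perronClass U f K) := hP.to_subtype
  have hbdd : ∀ x, BddAbove (range fun v : perronClass U f K => v.1 x) := by
    refine fun x => ⟨f z₀ + K * dist x z₀, ?_⟩
    rintro _ ⟨v, rfl⟩
    simpa only [v.2.2.1 hz₀] using (lipschitzWith_of_mem_perronClass hU v.2).le_add_mul x z₀
  have hle : ∀ v ∈ perronClass U f K, ∀ x, v x ≤ ⨆ v : perronClass U f K, v.1 x :=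
    fun v hv x => le_ciSup (hbdd x) ⟨v, hv⟩
  obtain ⟨v, hv⟩ := hP
  refine ⟨⟨ComparesWithConesAbove.iSup (fun v => v.2.1) hbdd, fun x hx => ?_,
    fun x z hz => (hv.2.2 x z hz).trans (hle v hv x)⟩, hle⟩
  simp only [fun v : perronClass U f K => v.2.2.1 hx, ciSup_const]

end Perron

section Existence

variable {E : Type*} [NormedAddCommGroup E] [NormedSpace ℝ E] {U W : Set E} {f u : E → ℝ}
  {K : ℝ≥0}

lemma exists_mem_frontier_dist_add_dist (hW : IsOpen W) {x z : E} (hx : x ∈ W) (hz : z ∉ W) :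
    ∃ y ∈ frontier W, dist x y + dist y z = dist x z := by
  suffices ∃ y ∈ segment ℝ x z, y ∈ frontier W from
    let ⟨y, hy, hyW⟩ := this
    ⟨y, hyW, dist_add_dist_of_mem_segment hy⟩
  by_contra! hcon
  have hcover : segment ℝ x z ⊆ W ∪ (closure W)ᶜ := fun y hy =>
    or_iff_not_imp_left.2 fun hyW hyc => hcon y hy (hW.frontier_eq ▸ ⟨hyc, hyW⟩)
  have hsub : segment ℝ x z ⊆ W :=
    (convex_segment x z).isPreconnected.subset_left_of_subset_union hW
      isClosed_closure.isOpen_compl (disjoint_compl_right.mono_left subset_closure) hcover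
      ⟨x, left_mem_segment ℝ x z, hx⟩
  exact hz (hsub (right_mem_segment ℝ x z))

lemma comparesWithConesAbove_sub_mul_dist {z : E} (hz : z ∉ U) (c : ℝ) {b : ℝ} (hb : 0 ≤ b) :
    ComparesWithConesAbove U (fun x => c - b * dist x z) := by
  intro W hWU hW z' hz' a' b' hb' h x hx
  beta_reduce at h ⊢
  -- Walk from `x` towards the vertex of the steeper cone until the boundary of `W`.
  rcases le_total b' b with hbb | hbb
  · obtain ⟨y, hy, hd⟩ := exists_mem_frontier_dist_add_dist hW hx fun hzW => hz (hWU hzW)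
    have hyb := h y hy
    have htri : b' * dist y z' ≤ b' * (dist x y + dist x z') := by
      gcongr
      exact dist_triangle_left y z' x
    have hslope : b' * dist x y ≤ b * dist x y := by gcongr
    rw [← hd]
    linarith
  · obtain ⟨y, hy, hd⟩ := exists_mem_frontier_dist_add_dist hW hx hz'
    have hyb := h y hy
    have htri : b * dist y z ≤ b * (dist x y + dist x z) := by
      gcongr
      exact dist_triangle_left y z x
    have hslope : b * dist x y ≤ b' * dist x y := by gcongr
    rw [← hd]
    linarith

-- The witness is McShane's smallest `K`-Lipschitz extension of `f` from the complement of `U`.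
lemma perronClass_nonempty (hne : U ≠ univ) (hf : LipschitzWith K f) :
    (perronClass U f K).Nonempty := by
  have : Nonempty ↥Uᶜ := (nonempty_compl.2 hne).to_subtype
  have hle : ∀ (x : E) (z : ↥Uᶜ), f z - K * dist x z ≤ f x := fun x z => by
    have := hf.le_add_mul z x
    rw [dist_comm] at this
    linarith
  have hbdd : ∀ x : E, BddAbove (range fun z : ↥Uᶜ => f z - K * dist x z) := fun x =>
    ⟨f x, forall_mem_range.2 (hle x)⟩
  refine ⟨fun x => ⨆ z : ↥Uᶜ, f z - K * dist x z,
    .iSup (fun z => comparesWithConesAbove_sub_mul_dist z.2 (f z) K.coe_nonneg) hbdd,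
    fun x hx => (ciSup_le (hle x)).antisymm ?_, fun x z hz => le_ciSup (hbdd x) ⟨z, hz⟩⟩
  simpa using le_ciSup (hbdd x) ⟨x, hx⟩

lemma comparesWithConesAbove_neg_of_isGreatest (hU : IsOpen U)
    (hu : IsGreatest (perronClass U f K) u) : ComparesWithConesAbove U (-u) := by
  have hcont : Continuous u := (lipschitzWith_of_mem_perronClass hU hu.1).continuous
  obtain ⟨⟨hcone, heq, hlow⟩, hmax⟩ := hu
  intro W hWU hW z hz a b hb h x hx
  by_contra! hx_lt
  -- Raising `u` to the cone it violates gives a larger member of the class.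
  set cone : E → ℝ := fun y => -a - b * dist y z with hcone_def
  set W' : Set E := W ∩ {y | u y < cone y}
  have hcone_cont : Continuous cone := by fun_prop
  have hW' : IsOpen W' := hW.inter (isOpen_lt hcont hcone_cont)
  have hxW' : x ∈ W' := by
    refine ⟨hx, show u x < -a - b * dist x z from ?_⟩
    rw [Pi.neg_apply] at hx_lt
    linarith
  have heq_frontier : ∀ y ∈ frontier W', u y = cone y := fun y hy =>
    eq_of_mem_frontier_inter_lt hcont hcone_cont (fun w hw => by
      have := h w hw
      rw [Pi.neg_apply] at this
      simp only [hcone_def]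
      linarith) hy
  classical
  have hle : u ≤ W'.piecewise cone u := fun y => by
    by_cases hy : y ∈ W'
    · rw [piecewise_eq_of_mem _ _ _ hy]
      exact hy.2.le
    · rw [piecewise_eq_of_notMem _ _ _ hy]
  have hmem : W'.piecewise cone u ∈ perronClass U f K := by
    refine ⟨hcone.piecewise (comparesWithConesAbove_sub_mul_dist (fun hz' => hz hz'.1) _ hb) hW'
      (fun y hy => hy.2.le) heq_frontier, fun y hy => ?_,
      fun y w hw => (hlow y w hw).trans (hle y)⟩
    rw [piecewise_eq_of_notMem _ _ _ fun hyW' => hy (hWU hyW'.1)]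
    exact heq hy
  have := hmax hmem x
  rw [piecewise_eq_of_mem _ _ _ hxW'] at this
  exact this.not_gt hxW'.2

theorem exists_lipschitz_extension_comparesWithCones (hU : IsOpen U) (hne : U ≠ univ)
    (hf : LipschitzWith K f) :
    ∃ u : E → ℝ, LipschitzWith K u ∧ ComparesWithConesAbove U u ∧ ComparesWithConesAbove U (-u) ∧
      EqOn u f Uᶜ :=
  have hmax := isGreatest_iSup_perronClass hU hne (perronClass_nonempty hne hf)
  ⟨_, lipschitzWith_of_mem_perronClass hU hmax.1, hmax.1.1,
    comparesWithConesAbove_neg_of_isGreatest hU hmax, hmax.1.2.1⟩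

lemma exists_comparesWithCones_bump (hU : IsOpen U) (hne : U ≠ univ) (A : Set E) {δ : ℝ}
    (hδ : 0 < δ) :
    ∃ u : E → ℝ, (∃ K : ℝ≥0, LipschitzWith K u) ∧ ComparesWithConesAbove U u ∧
      ComparesWithConesAbove U (-u) ∧ (∀ x, u x ∈ Icc 0 1) ∧ (∀ x ∈ A \ U, u x = 1) ∧
      ∀ x ∉ U, x ∉ thickening δ A → u x = 0 := by
  set f : E → ℝ := fun x => thickenedIndicator hδ A x
  obtain ⟨u, hlip, hu, hneg, heq⟩ := exists_lipschitz_extension_comparesWithCones hU hne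
    (f := f) (lipschitzWith_thickenedIndicator hδ A)
  have hf0 : ∀ x, 0 ≤ f x := fun x => NNReal.coe_nonneg _
  have hf1 : ∀ x, f x ≤ 1 := fun x => NNReal.coe_le_one.2 (thickenedIndicator_le_one hδ A x)
  refine ⟨u, ⟨_, hlip⟩, hu, hneg, fun x => ?_, fun x hx => ?_, fun x hxU hxA => ?_⟩
  · by_cases hx : x ∈ U
    · have hneg0 : (-u) x ≤ 0 := hneg.le_of_frontier_le hU hne (fun w hw => by
        simpa only [Pi.neg_apply, heq (notMem_of_mem_frontier hU hw), neg_nonpos] using hf0 w) hx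
      exact ⟨neg_nonpos.1 hneg0, hu.le_of_frontier_le hU hne (fun w hw => by
        simpa only [heq (notMem_of_mem_frontier hU hw)] using hf1 w) hx⟩
    · exact heq hx ▸ ⟨hf0 x, hf1 x⟩
  · simp only [heq hx.2, f, thickenedIndicator_one hδ A hx.1, NNReal.coe_one]
  · simp only [heq hxU, f, thickenedIndicator_zero hδ A hxA, NNReal.coe_zero]

end Existence

section Chain

variable {E : Type*} [NormedAddCommGroup E] [NormedSpace ℝ E] {U : Set E} {u : E → ℝ}

lemma dist_lineMap_max_le {x z : E} {c τ₀ τ : ℝ} (hτ₀ : 0 < τ₀) (hτ : τ₀ ≤ τ)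
    (hzx : dist z x ≤ 4 * c) :
    dist (AffineMap.lineMap z x τ) (AffineMap.lineMap z x (max τ₀ (8 / 9 * τ)) : E) ≤
      max τ₀ (8 / 9 * τ) * c / 2 := by
  set σ := max τ₀ (8 / 9 * τ)
  have hστ : σ ≤ τ := max_le hτ (by linarith)
  have hτσ : 8 / 9 * τ ≤ σ := le_max_right _ _
  rw [dist_lineMap_lineMap, Real.dist_eq, abs_of_nonneg (sub_nonneg.2 hστ)]
  calc (τ - σ) * dist z x ≤ σ / 8 * (4 * c) :=
        mul_le_mul (by linarith) hzx dist_nonneg (by linarith)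
    _ = σ * c / 2 := by ring

-- Each ball in the chain lets `τ` grow by the factor `9 / 8` and costs a factor `1 / 2`.
lemma ComparesWithConesAbove.half_pow_mul_sub_le_sub_lineMap (hu : ComparesWithConesAbove U u)
    (hU : IsOpen U) {x z : E} {c τ₀ M : ℝ} (hc : 0 < c) (hτ₀ : 0 < τ₀) (hzx : dist z x ≤ 4 * c)
    (hsub : ∀ τ ∈ Icc τ₀ 1, closedBall (AffineMap.lineMap z x τ) (τ * c) ⊆ U)
    (hM : ∀ τ ∈ Icc τ₀ 1, ∀ w ∈ closedBall (AffineMap.lineMap z x τ) (τ * c), u w ≤ M) (k : ℕ) :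
    ∀ τ ∈ Icc τ₀ 1, τ ≤ (9 / 8) ^ k * τ₀ →
      (1 / 2) ^ k * (M - u (AffineMap.lineMap z x τ₀)) ≤ M - u (AffineMap.lineMap z x τ) := by
  induction k with
  | zero =>
    intro τ hτ hτk
    obtain rfl : τ = τ₀ := le_antisymm (by simpa using hτk) hτ.1
    simp
  | succ k ih =>
    intro τ hτ hτk
    set σ := max τ₀ (8 / 9 * τ)
    have hσ : σ ∈ Icc τ₀ 1 := ⟨le_max_left _ _, max_le (hτ.1.trans hτ.2) (by linarith [hτ.2])⟩
    have hσk : σ ≤ (9 / 8) ^ k * τ₀ :=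
      max_le (le_mul_of_one_le_left hτ₀.le (one_le_pow₀ (by norm_num)))
        (by rw [pow_succ] at hτk; linarith)
    calc (1 / 2) ^ (k + 1) * (M - u (AffineMap.lineMap z x τ₀))
        = (1 / 2) ^ k * (M - u (AffineMap.lineMap z x τ₀)) / 2 := by ring
      _ ≤ (M - u (AffineMap.lineMap z x σ)) / 2 := by gcongr; exact ih σ hσ hσk
      _ ≤ M - u (AffineMap.lineMap z x τ) :=
        hu.half_sub_le_sub_of_closedBall_subset hU (mul_pos (hτ₀.trans_le hσ.1) hc) (hsub σ hσ)
          (hM σ hσ) (dist_lineMap_max_le hτ₀ hτ.1 hzx)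

end Chain

section UnitBall

variable {E : Type*} [NormedAddCommGroup E] {S : Set E}

lemma one_sub_norm_le_infDist (hS : S ⊆ sphere 0 1) (hne : S.Nonempty) (x : E) :
    1 - ‖x‖ ≤ infDist x S := by
  refine (le_infDist hne).2 fun s hs => ?_
  have hs1 : ‖s‖ = 1 := mem_sphere_zero_iff_norm.1 (hS hs)
  simpa only [hs1, dist_eq_norm'] using norm_sub_norm_le s x

variable [NormedSpace ℝ E]

lemma exists_mem_sphere_dist_eq [Nontrivial E] (x : E) :
    ∃ z ∈ sphere (0 : E) 1, dist x z = |1 - ‖x‖| := by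
  obtain ⟨e, he, hxe⟩ : ∃ e : E, ‖e‖ = 1 ∧ x = ‖x‖ • e := by
    rcases eq_or_ne x 0 with rfl | hx
    · obtain ⟨e, he⟩ := exists_norm_eq E zero_le_one
      exact ⟨e, he, by simp⟩
    · exact ⟨NormedSpace.normalize x, NormedSpace.norm_normalize hx,
        (NormedSpace.norm_smul_normalize x).symm⟩
  refine ⟨e, mem_sphere_zero_iff_norm.2 he, ?_⟩
  calc dist x e = ‖(1 - ‖x‖) • e‖ := by rw [sub_smul, one_smul, ← hxe, dist_eq_norm']
    _ = |1 - ‖x‖| := by rw [norm_smul, he, mul_one, Real.norm_eq_abs]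

lemma norm_lineMap_le {x z : E} {t τ : ℝ} (hz : ‖z‖ ≤ 1) (hx : ‖x‖ ≤ 1 - t) (hτ : τ ∈ Icc 0 1) :
    ‖(AffineMap.lineMap z x τ : E)‖ ≤ 1 - τ * t := by
  rw [AffineMap.lineMap_apply_module]
  calc ‖(1 - τ) • z + τ • x‖ ≤ (1 - τ) * ‖z‖ + τ * ‖x‖ := by
        refine (norm_add_le _ _).trans_eq ?_
        rw [norm_smul, norm_smul, Real.norm_of_nonneg hτ.1,
          Real.norm_of_nonneg (sub_nonneg.2 hτ.2)]
    _ ≤ (1 - τ) * 1 + τ * (1 - t) := by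
        gcongr
        · exact sub_nonneg.2 hτ.2
        · exact hτ.1
    _ = 1 - τ * t := by ring

end UnitBall

lemma IsPorousIn.exists_le_infDist {X : Type*} [MetricSpace X] {α r : ℝ} {S Z : Set X}
    (h : IsPorousIn α S Z) (hne : S.Nonempty) (hα : 0 < α) (hr : 0 < r) (hrZ : r < diam Z) {z : X}
    (hz : z ∈ Z) : ∃ z' ∈ Z, dist z' z < r ∧ α * r ≤ infDist z' S := by
  obtain ⟨z', hz', hsub, hdisj⟩ := h r hr hrZ z hz
  refine ⟨z', hz', hsub ⟨mem_ball_self (mul_pos hα hr), hz'⟩, (le_infDist hne).2 fun s hs => ?_⟩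
  by_contra! hlt
  exact notMem_empty s (hdisj ▸ ⟨mem_ball'.2 hlt, hs⟩)

lemma exists_chain_length {α : ℝ} (hα0 : 0 < α) (hα1 : α ≤ 1 / 2) :
    ∃ k : ℕ, 1 ≤ (9 / 8) ^ k * (α / 8) ∧ α ^ 26 ≤ (1 / 2) ^ (k + 1) := by
  obtain ⟨k, hk, hk'⟩ := exists_nat_pow_near (x := 8 / α) (y := 9 / 8)
    (by rw [le_div_iff₀ hα0]; linarith) (by norm_num)
  refine ⟨k + 1, ?_, ?_⟩
  · rw [div_lt_iff₀ hα0] at hk'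
    linarith
  · have hpow : 2 ^ k * α ^ 6 ≤ 8 ^ 6 :=
      calc 2 ^ k * α ^ 6 ≤ ((9 / 8) ^ 6) ^ k * α ^ 6 := by gcongr; norm_num
        _ = ((9 / 8) ^ k * α) ^ 6 := by rw [mul_pow, ← pow_mul, ← pow_mul, mul_comm 6 k]
        _ ≤ 8 ^ 6 := by gcongr; exact (le_div_iff₀ hα0).1 hk
    rw [one_div_pow, le_div_iff₀ (by positivity)]
    calc α ^ 26 * 2 ^ (k + 1 + 1) = 4 * α ^ 20 * (2 ^ k * α ^ 6) := by ring
      _ ≤ 4 * (1 / 2) ^ 20 * 8 ^ 6 := by gcongr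
      _ = 1 := by norm_num

section Decay

variable {E : Type*} [NormedAddCommGroup E] {S : Set E} {u : E → ℝ} {r M α : ℝ}

/-- The inductive hypothesis of the decay argument: `u` satisfies comparison with cones from above
in the unit ball and, at distance at least `r` from `S`, vanishes on the unit sphere and is at most
`M` in the closed ball. -/
structure HasDecayBound (S : Set E) (u : E → ℝ) (r M : ℝ) : Prop where
  comparison : ComparesWithConesAbove (ball 0 1) u
  eq_zero : ∀ x ∈ sphere 0 1, r ≤ infDist x S → u x = 0
  le : ∀ x ∈ closedBall 0 1, r ≤ infDist x S → u x ≤ M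

namespace HasDecayBound

variable [NormedSpace ℝ E]

lemma le_half_of_dist_le (h : HasDecayBound S u r M) {x z : E} {s : ℝ} (hs : 0 < s)
    (hz : z ∈ sphere 0 1) (hzS : s + r ≤ infDist z S) (hx : x ∈ closedBall 0 1)
    (hxz : dist x z ≤ s / 2) : u x ≤ M / 2 := by
  have hfar : ∀ w, dist w z ≤ s → r ≤ infDist w S := fun w hw => by
    have := infDist_le_infDist_add_dist (s := S) (x := z) (y := w)
    rw [dist_comm] at this
    linarith
  have huz : u z = 0 := h.eq_zero z hz (by linarith)
  have hhalf : (M - u z) / 2 ≤ M - u x := by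
    apply h.comparison.half_sub_le_sub isOpen_ball hs (hxy := hxz)
    · intro w hw hwz
      rw [closure_ball _ one_ne_zero] at hw
      exact h.le w hw (hfar w hwz)
    · intro w hw hwz
      rw [frontier_ball _ one_ne_zero] at hw
      rw [huz, h.eq_zero w hw (hfar w hwz)]
    · rw [closure_ball _ one_ne_zero]
      exact sphere_subset_closedBall hz
    · rwa [closure_ball _ one_ne_zero]
  linarith

lemma half_pow_mul_sub_le_sub (h : HasDecayBound S u r M) (hS : S ⊆ sphere 0 1)
    (hne : S.Nonempty) {x z : E} {t τ₀ : ℝ} (ht : 0 < t) (hτ₀ : 0 < τ₀) (hτ₀1 : τ₀ ≤ 1)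
    (hr : r ≤ τ₀ * t / 2) (hz : ‖z‖ ≤ 1) (hx : ‖x‖ ≤ 1 - t) (hxz : dist x z ≤ 2 * t) {k : ℕ}
    (hk : 1 ≤ (9 / 8) ^ k * τ₀) :
    (1 / 2) ^ k * (M - u (AffineMap.lineMap z x τ₀)) ≤ M - u x := by
  have hnorm : ∀ τ ∈ Icc τ₀ 1, ∀ w ∈ closedBall (AffineMap.lineMap z x τ) (τ * (t / 2)),
      ‖w‖ ≤ 1 - τ₀ * t / 2 := by
    intro τ hτ w hw
    have hcenter := norm_lineMap_le hz hx ⟨hτ₀.le.trans hτ.1, hτ.2⟩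
    have hw' := norm_le_norm_add_const_of_dist_le hw
    have hτt : τ₀ * t ≤ τ * t := by gcongr; exact hτ.1
    linarith
  have hdepth : 0 < τ₀ * t := mul_pos hτ₀ ht
  have hchain := h.comparison.half_pow_mul_sub_le_sub_lineMap isOpen_ball (x := x) (z := z) (M := M)
    (half_pos ht) hτ₀ (by rw [dist_comm]; linarith)
    (fun τ hτ w hw => mem_ball_zero_iff.2 (by linarith [hnorm τ hτ w hw]))
    (fun τ hτ w hw => h.le w (mem_closedBall_zero_iff.2 (by linarith [hnorm τ hτ w hw]))
      (by linarith [hnorm τ hτ w hw, one_sub_norm_le_infDist hS hne w]))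
    k 1 ⟨hτ₀1, le_rfl⟩ hk
  rwa [AffineMap.lineMap_apply_one] at hchain

lemma le_of_porous_of_lt_one_sub_norm (h : HasDecayBound S u r M) (hS : S ⊆ sphere 0 1)
    (hne : S.Nonempty) (hpor : IsPorousIn α S (sphere 0 1)) (hα0 : 0 < α) (hα1 : α ≤ 1 / 2)
    {x z : E} (hz : z ∈ sphere 0 1) (hxz : dist x z = 1 - ‖x‖) (hx : ‖x‖ < 1)
    (hr : 16 * r ≤ α * (1 - ‖x‖)) : u x ≤ (1 - α ^ 26) * M := by
  set t := 1 - ‖x‖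
  have ht : 0 < t := sub_pos.2 hx
  have hαt : 0 < α * t := mul_pos hα0 ht
  have : Nontrivial E := ⟨z, 0, ne_zero_of_mem_unit_sphere ⟨z, hz⟩⟩
  have hdiam : t < diam (sphere (0 : E) 1) := by
    rw [diam_sphere_eq _ zero_le_one]
    linarith [norm_nonneg x]
  obtain ⟨z', hz', hzz', hz'S⟩ := hpor.exists_le_infDist hne hα0 ht hdiam hz
  have hz'1 : ‖z'‖ = 1 := mem_sphere_zero_iff_norm.1 hz'
  have hxz' : dist x z' ≤ 2 * t := by linarith [dist_triangle_right x z' z]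
  have hM : 0 ≤ M := (h.eq_zero z' hz' (by linarith)).symm.le.trans
    (h.le z' (sphere_subset_closedBall hz') (by linarith))
  have hstart : u (AffineMap.lineMap z' x (α / 8)) ≤ M / 2 := by
    refine h.le_half_of_dist_le (s := α * t / 2) (by linarith) hz' (by linarith) ?_ ?_
    · have := norm_lineMap_le hz'1.le (sub_sub_cancel 1 ‖x‖).ge (τ := α / 8)
        ⟨by linarith, by linarith⟩
      exact mem_closedBall_zero_iff.2 (by linarith)
    · rw [dist_lineMap_left, dist_comm, Real.norm_of_nonneg (by linarith)]
      calc α / 8 * dist x z' ≤ α / 8 * (2 * t) := by gcongr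
        _ = α * t / 2 / 2 := by ring
  obtain ⟨k, hk, hαk⟩ := exists_chain_length hα0 hα1
  have hchain := h.half_pow_mul_sub_le_sub hS hne ht (by linarith) (by linarith) (by linarith)
    hz'1.le (sub_sub_cancel 1 ‖x‖).ge hxz' hk
  have : α ^ 26 * M ≤ M - u x :=
    calc α ^ 26 * M ≤ (1 / 2) ^ (k + 1) * M := by gcongr
      _ = (1 / 2) ^ k * (M - M / 2) := by ring
      _ ≤ (1 / 2) ^ k * (M - u (AffineMap.lineMap z' x (α / 8))) := by gcongr
      _ ≤ M - u x := hchain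
  linarith

lemma improve (h : HasDecayBound S u r M) (hS : S ⊆ sphere 0 1) (hne : S.Nonempty)
    (hpor : IsPorousIn α S (sphere 0 1)) (hα0 : 0 < α) (hα1 : α ≤ 1 / 2) (hr : 0 < r) :
    HasDecayBound S u (64 / α * r) ((1 - α ^ 26) * M) := by
  have hscale : 128 ≤ 64 / α := by rw [le_div_iff₀ hα0]; linarith
  refine ⟨h.comparison, fun x hx hxS => h.eq_zero x hx (by nlinarith), fun x hx hxS => ?_⟩
  have hx1 : ‖x‖ ≤ 1 := mem_closedBall_zero_iff.1 hx
  obtain ⟨s, hs⟩ := id hne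
  have : Nontrivial E := ⟨s, 0, ne_zero_of_mem_unit_sphere ⟨s, hS hs⟩⟩
  obtain ⟨z, hz, hxz⟩ := exists_mem_sphere_dist_eq x
  rw [abs_of_nonneg (sub_nonneg.2 hx1)] at hxz
  set d := infDist x S
  have hrd : 128 * r ≤ d := (mul_le_mul_of_nonneg_right hscale hr.le).trans hxS
  rcases le_or_gt (1 - ‖x‖) (d / 4) with hnear | hdeep
  · have hzS : d ≤ infDist z S + dist x z := infDist_le_infDist_add_dist
    have hux : u x ≤ M / 2 :=
      h.le_half_of_dist_le (s := d / 2) (by linarith) hz (by linarith) hx (by linarith)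
    have hM : 0 ≤ M := (h.eq_zero z hz (by linarith)).symm.le.trans
      (h.le z (sphere_subset_closedBall hz) (by linarith))
    have hα26 : α ^ 26 ≤ 1 / 2 :=
      (pow_le_of_le_one hα0.le (by linarith) (by norm_num)).trans hα1
    calc u x ≤ (1 - 1 / 2) * M := by linarith
      _ ≤ (1 - α ^ 26) * M := by gcongr
  · have hαd : 64 * r ≤ α * d := by
      rwa [div_mul_eq_mul_div, div_le_iff₀' hα0] at hxS
    have hαt : α * (d / 4) ≤ α * (1 - ‖x‖) := by gcongr
    exact h.le_of_porous_of_lt_one_sub_norm hS hne hpor hα0 hα1 hz hxz (by linarith) (by linarith)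

lemma iterate (h : HasDecayBound S u r M) (hS : S ⊆ sphere 0 1) (hne : S.Nonempty)
    (hpor : IsPorousIn α S (sphere 0 1)) (hα0 : 0 < α) (hα1 : α ≤ 1 / 2) (hr : 0 < r) (j : ℕ) :
    HasDecayBound S u ((64 / α) ^ j * r) ((1 - α ^ 26) ^ j * M) := by
  induction j with
  | zero => simpa using h
  | succ j ih =>
    simpa only [pow_succ', mul_assoc] using ih.improve hS hne hpor hα0 hα1 (by positivity)

end HasDecayBound

end Decay

section InftyHarmonicMeasure

variable {E : Type*} [NormedAddCommGroup E] {A S : Set E} {u : E → ℝ} {α δ : ℝ}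

/-- The `∞`-harmonic measure of `A`, seen from the center of the unit ball of a normed space `E`;
on `Euc n` it is `omegaInf n`. -/
def inftyHarmonicMeasure (A : Set E) : ℝ :=
  sInf {t : ℝ | ∃ u : E → ℝ,
    (∀ x ∈ closedBall (0 : E) 1, 0 ≤ u x) ∧
    (∃ K : ℝ≥0, LipschitzOnWith K u (closedBall (0 : E) 1)) ∧
    IsAbsolutelyMinimalOn (ball (0 : E) 1) u ∧
    (∀ x ∈ A, 1 ≤ u x) ∧ t = u 0}

lemma inftyHarmonicMeasure_le (h0 : ∀ x ∈ closedBall (0 : E) 1, 0 ≤ u x)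
    (hlip : ∃ K : ℝ≥0, LipschitzOnWith K u (closedBall 0 1))
    (hmin : IsAbsolutelyMinimalOn (ball 0 1) u) (h1 : ∀ x ∈ A, 1 ≤ u x) :
    inftyHarmonicMeasure A ≤ u 0 := by
  refine csInf_le ⟨0, ?_⟩ ⟨u, h0, hlip, hmin, h1, rfl⟩
  rintro _ ⟨v, hv, -, -, -, rfl⟩
  exact hv 0 (by simp)

lemma inftyHarmonicMeasure_empty : inftyHarmonicMeasure (∅ : Set E) = 0 := by
  refine le_antisymm (inftyHarmonicMeasure_le (u := fun _ => 0) (fun _ _ => le_rfl)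
    ⟨0, (LipschitzWith.const 0).lipschitzOnWith⟩ (fun V _ _ => by simp [lipOn]) (by simp)) ?_
  apply Real.sInf_nonneg
  rintro _ ⟨v, hv, -, -, -, rfl⟩
  exact hv 0 (by simp)

lemma inftyHarmonicMeasure_closedNhd_le_pow [NormedSpace ℝ E] (hα0 : 0 < α) (hα1 : α ≤ 1 / 2)
    (hδ : 0 < δ) (hS : S ⊆ sphere 0 1) (hne : S.Nonempty) (hpor : IsPorousIn α S (sphere 0 1))
    {j : ℕ} (hj : (64 / α) ^ j * (2 * δ) ≤ 1) :
    inftyHarmonicMeasure {y | y ∈ sphere (0 : E) 1 ∧ ∃ s ∈ S, dist y s ≤ δ} ≤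
      (1 - α ^ 26) ^ j := by
  set A : Set E := {y | y ∈ sphere (0 : E) 1 ∧ ∃ s ∈ S, dist y s ≤ δ}
  have hsphere : ∀ x ∈ sphere (0 : E) 1, x ∉ ball (0 : E) 1 := fun x hx =>
    disjoint_left.1 sphere_disjoint_ball hx
  have hball : ball (0 : E) 1 ≠ univ :=
    (ne_univ_iff_exists_notMem _).2 (hne.imp fun s hs => hsphere s (hS hs))
  obtain ⟨u, ⟨K, hlip⟩, hu, hneg, hu01, huA, huzero⟩ :=
    exists_comparesWithCones_bump isOpen_ball hball A hδ
  have hfar : ∀ x, 2 * δ ≤ infDist x S → x ∉ thickening δ A := by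
    intro x hx hxA
    obtain ⟨y, ⟨-, s, hs, hys⟩, hxy⟩ := mem_thickening_iff.1 hxA
    linarith [infDist_le_dist_of_mem (x := x) hs, dist_triangle x y s]
  have hbound : HasDecayBound S u (2 * δ) 1 :=
    ⟨hu, fun x hx hxS => huzero x (hsphere x hx) (hfar x hxS), fun x _ _ => (hu01 x).2⟩
  have hdepth : 1 ≤ infDist (0 : E) S := by
    simpa using one_sub_norm_le_infDist hS hne 0
  calc inftyHarmonicMeasure A ≤ u 0 :=
        inftyHarmonicMeasure_le (fun x _ => (hu01 x).1) ⟨K, hlip.lipschitzOnWith⟩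
          (hu.isAbsolutelyMinimalOn hneg hlip.continuous)
          fun x hx => (huA x ⟨hx, hsphere x hx.1⟩).ge
    _ ≤ (1 - α ^ 26) ^ j * 1 :=
        (hbound.iterate hS hne hpor hα0 hα1 (by positivity) j).le 0 (by simp) (hj.trans hdepth)
    _ = (1 - α ^ 26) ^ j := mul_one _

end InftyHarmonicMeasure

lemma le_rpow_of_forall_le_pow {c ε δ B : ℝ} (hε0 : 0 ≤ ε) (hε1 : ε ≤ 1) (hB : 2 ≤ B)
    (hδ : 0 < δ) (hBδ : B * (2 * δ) ≤ 1)
    (hc : ∀ j : ℕ, B ^ j * (2 * δ) ≤ 1 → c ≤ (1 - ε) ^ j) : c ≤ δ ^ (ε / (3 * B)) := by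
  have hB0 : 0 < B := by linarith
  have hδ2 : 0 < 2 * δ := by positivity
  obtain ⟨j, hj, hj'⟩ := exists_nat_pow_near (x := 1 / (2 * δ)) (y := B)
    (by rw [le_div_iff₀ hδ2]; nlinarith) (by linarith)
  rw [le_div_iff₀ hδ2] at hj
  have hj1 : 1 ≤ j := by
    by_contra! hj0
    obtain rfl : j = 0 := by omega
    rw [zero_add, pow_one, div_lt_iff₀ hδ2] at hj'
    linarith
  have hδB : δ⁻¹ ≤ B ^ (3 * j) :=
    calc δ⁻¹ = 2 * (1 / (2 * δ)) := by field_simp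
      _ ≤ B * B ^ (j + 1) := by gcongr
      _ = B ^ (j + 2) := by ring
      _ ≤ B ^ (3 * j) := pow_le_pow_right₀ (by linarith) (by omega)
  have hlog : -Real.log δ ≤ 3 * j * B :=
    calc -Real.log δ = Real.log δ⁻¹ := (Real.log_inv δ).symm
      _ ≤ Real.log (B ^ (3 * j)) := Real.log_le_log (by positivity) hδB
      _ = 3 * j * Real.log B := by rw [Real.log_pow]; push_cast; rfl
      _ ≤ 3 * j * B := by gcongr; exact Real.log_le_self hB0.le
  calc c ≤ (1 - ε) ^ j := hc j hj
    _ ≤ Real.exp (-ε) ^ j :=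
      pow_le_pow_left₀ (sub_nonneg.2 hε1) (Real.one_sub_le_exp_neg ε) j
    _ = Real.exp (-(ε / (3 * B) * (3 * j * B))) := by
      rw [← Real.exp_nat_mul]
      congr 1
      field_simp
    _ ≤ Real.exp (-(ε / (3 * B) * -Real.log δ)) := by gcongr
    _ = δ ^ (ε / (3 * B)) := by
      rw [Real.rpow_def_of_pos hδ]
      congr 1
      ring

theorem stmt8_general {E : Type*} [NormedAddCommGroup E] [NormedSpace ℝ E] {S : Set E} {α δ : ℝ}
    (hα0 : 0 < α) (hα1 : α ≤ 1 / 2) (hδ0 : 0 < δ) (hδ1 : δ ≤ α / 128) (hS : S ⊆ sphere 0 1)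
    (hpor : IsPorousIn α S (sphere 0 1)) :
    inftyHarmonicMeasure {y | y ∈ sphere (0 : E) 1 ∧ ∃ s ∈ S, dist y s ≤ δ} ≤ δ ^ (α ^ 35) := by
  rcases S.eq_empty_or_nonempty with rfl | hne
  · simpa [inftyHarmonicMeasure_empty] using Real.rpow_nonneg hδ0.le (α ^ 35)
  have hB : 2 ≤ 64 / α := by rw [le_div_iff₀ hα0]; linarith
  have hscale : 64 / α * (2 * δ) ≤ 1 := by rw [div_mul_eq_mul_div, div_le_one hα0]; linarith
  have hexp : α ^ 35 ≤ α ^ 26 / (3 * (64 / α)) :=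
    calc α ^ 35 = α ^ 27 * α ^ 8 := by ring
      _ ≤ α ^ 27 * (1 / 2) ^ 8 := by gcongr
      _ ≤ α ^ 27 * (1 / 192) := by gcongr; norm_num
      _ = α ^ 26 / (3 * (64 / α)) := by field_simp; norm_num
  calc inftyHarmonicMeasure {y | y ∈ sphere (0 : E) 1 ∧ ∃ s ∈ S, dist y s ≤ δ}
      ≤ δ ^ (α ^ 26 / (3 * (64 / α))) :=
        le_rpow_of_forall_le_pow (by positivity) (pow_le_one₀ hα0.le (by linarith)) hB hδ0 hscale
          fun _ => inftyHarmonicMeasure_closedNhd_le_pow hα0 hα1 hδ0 hS hne hpor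
    _ ≤ δ ^ (α ^ 35) := Real.rpow_le_rpow_of_exponent_ge hδ0 (by linarith) hexp

/-- There is a universal `C > 0` such that for all `n ≥ 2` and `α ∈ (0, 1/2)` there is
`δ₀ > 0` with: for every `δ ∈ (0, δ₀)` and every `α`-porous subset `S` of the unit
sphere of `ℝⁿ`, the `∞`-harmonic measure (from the center of the ball) of the closed
`δ`-neighborhood of `S` in the sphere is at most `δ^(α^C)`. -/
theorem stmt8 :
    ∃ C : ℝ, 0 < C ∧
      ∀ n : ℕ, 2 ≤ n → ∀ α : ℝ, 0 < α → α < 1 / 2 →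
        ∃ δ₀ : ℝ, 0 < δ₀ ∧
          ∀ δ : ℝ, 0 < δ → δ < δ₀ →
            ∀ S : Set (Euc n), S ⊆ sphere (0 : Euc n) 1 →
              IsPorousIn α S (sphere (0 : Euc n) 1) →
              omegaInf n
                  {y : Euc n | y ∈ sphere (0 : Euc n) 1 ∧ ∃ s ∈ S, dist y s ≤ δ} ≤
                δ ^ (α ^ C) := by
  refine ⟨35, by norm_num, fun n _ α hα0 hα1 => ⟨α / 128, by positivity,
    fun δ hδ0 hδ1 S hS hpor => ?_⟩⟩
  rw [Real.rpow_ofNat]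
  exact stmt8_general hα0 hα1.le hδ0 hδ1.le hS hpor

end
end

section
/- Let X be a length space and let F : Y → ℝ be defined on a nonempty subset Y ⊆ X. The following three conditions are equivalent: (1) F is uniformly continuous on Y and sup{(F(y)−F(y'))/max(1, d(y,y')) : y, y' ∈ Y} < ∞; (2) F extends to a uniformly continuous function on all of X; (3) there is a sequence of Lipschitz functions Fₙ : Y → ℝ with sup_Y |Fₙ − F| → 0 as n → ∞. -/
open Metric Set

noncomputable section

/-- The length of a continuous path: its total variation. -/
def pathLength {X : Type*} [MetricSpace X] {x y : X} (γ : Path x y) : ENNReal :=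
  eVariationOn (fun t => γ t) (Set.univ : Set unitInterval)

/-- A metric space is a length space if the distance between any two points equals the
infimum of the lengths of continuous paths joining them. -/
def IsLengthSpace (X : Type*) [MetricSpace X] : Prop :=
  ∀ x y : X, edist x y = ⨅ γ : Path x y, pathLength γ

/-- `u : X → ℝ` is an absolutely minimal (AM) extension of `F` prescribed on `Y`:
`u` is Lipschitz, `u = F` on `Y`, and `Lip_U u = Lip_{∂U} u` for every open `U ⊆ X \ Y`. -/
def IsAMExtension {X : Type*} [MetricSpace X] (Y : Set X) (F u : X → ℝ) : Prop :=
  lipOn u Set.univ < ⊤ ∧ Set.EqOn u F Y ∧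
    ∀ U : Set X, IsOpen U → U ⊆ Yᶜ → lipOn u U = lipOn u (frontier U)

/-!
All three conditions say that `F` is *almost Lipschitz* on `Y`: for every `ε > 0` there is `K` with
`|F y - F y'| ≤ ε + K d(y, y')`.

A uniformly continuous function on a length space satisfies this, because a distance `< n δ` can be
covered by `n` steps of length `< δ`. Conversely, the infimum of the affine functions
`t ↦ ε + K(ε) t` is a subadditive function `ω` vanishing at `0`, so `ω ∘ d` is a pseudometric for
which `F` is `1`-Lipschitz, and McShane's extension of `F` for this pseudometric is again almost
Lipschitz. For a single pair `(ε, K)`, the infimal convolution `x ↦ inf_y (F y + K d(x, y))` is a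
Lipschitz function within `ε` of `F`.
-/

open Filter Topology
open scoped NNReal

section AlmostLipschitz

variable {X Z : Type*} [PseudoMetricSpace X] [PseudoMetricSpace Z]

/-- `f` is almost Lipschitz on `s` if it is Lipschitz there up to an arbitrarily small additive
error, the Lipschitz constant being allowed to depend on the error. Equivalently, `f` has an affine
modulus of continuity `t ↦ ε + K t` for every `ε > 0`. -/
def AlmostLipschitzOn (f : X → Z) (s : Set X) : Prop :=
  ∀ ε : ℝ, 0 < ε → ∃ K : ℝ≥0, ∀ x ∈ s, ∀ y ∈ s, dist (f x) (f y) ≤ ε + K * dist x y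

variable {f g : X → Z} {s t : Set X}

lemma AlmostLipschitzOn.mono (hf : AlmostLipschitzOn f t) (hst : s ⊆ t) :
    AlmostLipschitzOn f s := fun ε hε =>
  (hf ε hε).imp fun _ hK x hx y hy => hK x (hst hx) y (hst hy)

lemma AlmostLipschitzOn.congr (hf : AlmostLipschitzOn f s) (hfg : EqOn f g s) :
    AlmostLipschitzOn g s := fun ε hε =>
  (hf ε hε).imp fun _ hK x hx y hy => by simpa only [← hfg hx, ← hfg hy] using hK x hx y hy

lemma almostLipschitzOn_of_lipschitzOnWith {K : ℝ≥0} (hf : LipschitzOnWith K f s) :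
    AlmostLipschitzOn f s := fun _ hε =>
  ⟨K, fun x hx y hy => (hf.dist_le_mul x hx y hy).trans (le_add_of_nonneg_left hε.le)⟩

lemma almostLipschitzOn_of_tendstoUniformlyOn {ι : Type*} {l : Filter ι} [l.NeBot]
    {F : ι → X → Z} (hF : ∀ i, AlmostLipschitzOn (F i) s) (h : TendstoUniformlyOn F f l s) :
    AlmostLipschitzOn f s := by
  intro ε hε
  obtain ⟨i, hi⟩ := (Metric.tendstoUniformlyOn_iff.1 h (ε / 3) (by positivity)).exists
  obtain ⟨K, hK⟩ := hF i (ε / 3) (by positivity)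
  refine ⟨K, fun x hx y hy => ?_⟩
  calc dist (f x) (f y)
      ≤ dist (f x) (F i x) + dist (F i x) (F i y) + dist (F i y) (f y) := dist_triangle4 _ _ _ _
    _ ≤ ε / 3 + (ε / 3 + K * dist x y) + ε / 3 := by
        gcongr
        · exact (hi x hx).le
        · exact hK x hx y hy
        · exact dist_comm (f y) _ ▸ (hi y hy).le
    _ = ε + K * dist x y := by ring

lemma AlmostLipschitzOn.uniformContinuousOn (hf : AlmostLipschitzOn f s) :
    UniformContinuousOn f s := by
  refine Metric.uniformContinuousOn_iff.2 fun ε hε => ?_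
  obtain ⟨K, hK⟩ := hf (ε / 2) (half_pos hε)
  refine ⟨ε / 2 / (K + 1), by positivity, fun x hx y hy hxy => ?_⟩
  have hxy' : (K + 1) * dist x y < ε / 2 := (lt_div_iff₀' (by positivity)).1 hxy
  linarith [hK x hx y hy, dist_nonneg (x := x) (y := y)]

lemma AlmostLipschitzOn.exists_dist_le_mul_max_one (hf : AlmostLipschitzOn f s) :
    ∃ M : ℝ, ∀ x ∈ s, ∀ y ∈ s, dist (f x) (f y) ≤ M * max 1 (dist x y) := by
  obtain ⟨K, hK⟩ := hf 1 one_pos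
  refine ⟨1 + K, fun x hx y hy => ?_⟩
  calc dist (f x) (f y) ≤ 1 + K * dist x y := hK x hx y hy
    _ ≤ max 1 (dist x y) + K * max 1 (dist x y) := by
        gcongr
        exacts [le_max_left _ _, le_max_right _ _]
    _ = (1 + K) * max 1 (dist x y) := by ring

lemma almostLipschitzOn_iff_uniformContinuousOn_and_dist_le :
    AlmostLipschitzOn f s ↔ UniformContinuousOn f s ∧
      ∃ M : ℝ, ∀ x ∈ s, ∀ y ∈ s, dist (f x) (f y) ≤ M * max 1 (dist x y) := by
  refine ⟨fun hf => ⟨hf.uniformContinuousOn, hf.exists_dist_le_mul_max_one⟩, ?_⟩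
  rintro ⟨hf, M, hM⟩ ε hε
  obtain ⟨δ, hδ, hfδ⟩ := Metric.uniformContinuousOn_iff.1 hf ε hε
  refine ⟨M.toNNReal * (max δ⁻¹ 1).toNNReal, fun x hx y hy => ?_⟩
  rcases lt_or_ge (dist x y) δ with hxy | hxy
  · exact (hfδ x hx y hy hxy).le.trans (le_add_of_nonneg_right (by positivity))
  have hmax : max 1 (dist x y) ≤ max δ⁻¹ 1 * dist x y := by
    rw [max_mul_of_nonneg _ _ dist_nonneg, one_mul]
    exact max_le_max_right _ ((le_inv_mul_iff₀ hδ).2 (by rwa [mul_one]))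
  rw [NNReal.coe_mul, Real.coe_toNNReal (max δ⁻¹ 1) (by positivity), mul_assoc]
  calc dist (f x) (f y) ≤ M * max 1 (dist x y) := hM x hx y hy
    _ ≤ M.toNNReal * (max δ⁻¹ 1 * dist x y) := by
        gcongr
        exact M.le_coe_toNNReal
    _ ≤ _ := le_add_of_nonneg_left hε.le

end AlmostLipschitz

section RealValued

variable {X : Type*} [PseudoMetricSpace X] {f : X → ℝ} {s : Set X}

lemma forall_sub_div_max_one_le_iff {M : ℝ} :
    (∀ x ∈ s, ∀ y ∈ s, (f x - f y) / max 1 (dist x y) ≤ M) ↔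
      ∀ x ∈ s, ∀ y ∈ s, dist (f x) (f y) ≤ M * max 1 (dist x y) := by
  have hpos : ∀ x y : X, 0 < max 1 (dist x y) := fun _ _ => lt_max_of_lt_left one_pos
  simp only [div_le_iff₀ (hpos _ _), Real.dist_eq]
  exact ⟨fun h x hx y hy => abs_sub_le_iff.2 ⟨h x hx y hy, dist_comm y x ▸ h y hy x hx⟩,
    fun h x hx y hy => (le_abs_self _).trans (h x hx y hy)⟩

lemma almostLipschitzOn_iff_uniformContinuousOn_and_sub_div_le :
    AlmostLipschitzOn f s ↔ UniformContinuousOn f s ∧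
      ∃ M : ℝ, ∀ x ∈ s, ∀ y ∈ s, (f x - f y) / max 1 (dist x y) ≤ M := by
  simp only [forall_sub_div_max_one_le_iff, almostLipschitzOn_iff_uniformContinuousOn_and_dist_le]

lemma exists_lipschitzOnWith_dist_le {ε : ℝ} {K : ℝ≥0}
    (hf : ∀ x ∈ s, ∀ y ∈ s, dist (f x) (f y) ≤ ε + K * dist x y) :
    ∃ g : X → ℝ, LipschitzOnWith K g s ∧ ∀ x ∈ s, dist (f x) (g x) ≤ ε := by
  have hlower : ∀ x ∈ s, ∀ y : s, f x - ε ≤ f y + K * dist x y := fun x hx y => by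
    linarith [(abs_le.1 (hf x hx y y.2)).2]
  have hbdd : ∀ x ∈ s, BddBelow (range fun y : s => f y + K * dist x y) := fun x hx =>
    ⟨f x - ε, forall_mem_range.2 (hlower x hx)⟩
  refine ⟨fun x => ⨅ y : s, (f y + K * dist x y), .of_le_add_mul K fun x hx x' _ => ?_,
    fun x hx => ?_⟩ <;> have : Nonempty s := ⟨⟨x, hx⟩⟩
  · refine le_ciInf_add fun y => (ciInf_le (hbdd x hx) y).trans ?_
    calc f y + K * dist x y ≤ f y + K * (dist x x' + dist x' y) := by
          gcongr
          exact dist_triangle _ _ _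
      _ = f y + K * dist x' y + K * dist x x' := by ring
  · have hle : ⨅ y : s, (f y + K * dist x y) ≤ f x := by
      simpa only [dist_self, mul_zero, add_zero] using ciInf_le (hbdd x hx) ⟨x, hx⟩
    rw [Real.dist_eq, abs_of_nonneg (sub_nonneg.2 hle)]
    exact sub_le_comm.1 (le_ciInf (hlower x hx))

lemma almostLipschitzOn_iff_exists_tendstoUniformlyOn :
    AlmostLipschitzOn f s ↔ ∃ F : ℕ → X → ℝ,
      (∀ n, ∃ K : ℝ≥0, LipschitzOnWith K (F n) s) ∧ TendstoUniformlyOn F f atTop s := by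
  constructor
  · intro hf
    choose K hK using fun n : ℕ => hf (1 / (n + 1)) Nat.one_div_pos_of_nat
    choose F hFK hF using fun n => exists_lipschitzOnWith_dist_le (hK n)
    refine ⟨F, fun n => ⟨K n, hFK n⟩, Metric.tendstoUniformlyOn_iff.2 fun ε hε => ?_⟩
    filter_upwards [tendsto_one_div_add_atTop_nhds_zero_nat.eventually_lt_const hε] with n hn x hx
    exact (hF n x hx).trans_lt hn
  · rintro ⟨F, hFK, hF⟩
    exact almostLipschitzOn_of_tendstoUniformlyOn
      (fun n => almostLipschitzOn_of_lipschitzOnWith (hFK n).choose_spec) hF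

end RealValued

section Extension

/-- A modulus: a monotone subadditive function vanishing at `0`, with which a pseudometric may be
composed. Continuity at `0` is not required. -/
structure IsSubadditiveModulus (ω : ℝ≥0 → ℝ≥0) : Prop where
  map_zero : ω 0 = 0
  monotone : Monotone ω
  map_add_le : ∀ a b, ω (a + b) ≤ ω a + ω b

/-- The pseudometric `ω ∘ d`, for which a function with modulus of continuity `ω` is
`1`-Lipschitz. It competes with the ambient instance on `X` and has to be passed explicitly. -/
abbrev IsSubadditiveModulus.pseudoMetricSpace {ω : ℝ≥0 → ℝ≥0} (hω : IsSubadditiveModulus ω)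
    (X : Type*) [PseudoMetricSpace X] : PseudoMetricSpace X where
  dist x y := ω (nndist x y)
  dist_self x := by rw [nndist_self, hω.map_zero, NNReal.coe_zero]
  dist_comm x y := by rw [nndist_comm]
  dist_triangle x y z :=
    NNReal.coe_le_coe.2 ((hω.monotone (nndist_triangle x y z)).trans (hω.map_add_le _ _))

variable {X : Type*} [PseudoMetricSpace X] {f : X → ℝ} {s : Set X}

lemma IsSubadditiveModulus.exists_extension {ω : ℝ≥0 → ℝ≥0} (hω : IsSubadditiveModulus ω)
    (hf : ∀ x ∈ s, ∀ y ∈ s, dist (f x) (f y) ≤ ω (nndist x y)) :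
    ∃ g : X → ℝ, (∀ x y, dist (g x) (g y) ≤ ω (nndist x y)) ∧ EqOn f g s := by
  obtain ⟨g, hg, hfg⟩ := @LipschitzOnWith.extend_real X (hω.pseudoMetricSpace X) f s 1
    (@LipschitzOnWith.mk_one X ℝ (hω.pseudoMetricSpace X) _ s f hf)
  have hdist := @LipschitzWith.dist_le_mul X ℝ (hω.pseudoMetricSpace X) _ 1 g hg
  exact ⟨g, fun x y => (hdist x y).trans_eq (one_mul _), hfg⟩

/-- The lower envelope of the affine functions `t ↦ ε + K ε * t`, `ε > 0`. It packages
the affine bounds of an almost Lipschitz function into a single modulus. -/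
def affineEnvelope (K : ℝ≥0 → ℝ≥0) (t : ℝ≥0) : ℝ≥0 :=
  ⨅ ε : Ioi (0 : ℝ≥0), ((ε : ℝ≥0) + K ε * t)

lemma affineEnvelope_le (K : ℝ≥0 → ℝ≥0) {ε : ℝ≥0} (hε : 0 < ε) (t : ℝ≥0) :
    affineEnvelope K t ≤ ε + K ε * t :=
  ciInf_le' (fun ε : Ioi (0 : ℝ≥0) => (ε : ℝ≥0) + K ε * t) ⟨ε, hε⟩

lemma le_affineEnvelope {K : ℝ≥0 → ℝ≥0} {a t : ℝ≥0} (h : ∀ ε, 0 < ε → a ≤ ε + K ε * t) :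
    a ≤ affineEnvelope K t :=
  le_ciInf fun ε => h ε ε.2

lemma isSubadditiveModulus_affineEnvelope (K : ℝ≥0 → ℝ≥0) :
    IsSubadditiveModulus (affineEnvelope K) where
  map_zero := nonpos_iff_eq_zero.1 <| le_of_forall_pos_le_add fun ε hε => by
    simpa only [mul_zero, add_zero, zero_add] using affineEnvelope_le K hε 0
  monotone a b hab := le_affineEnvelope fun ε hε => (affineEnvelope_le K hε a).trans (by gcongr)
  map_add_le a b := by
    refine NNReal.le_iInf_add_iInf fun ⟨ε, hε⟩ ⟨η, hη⟩ => ?_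
    -- Evaluating the envelope at `a + b` on the line of smaller slope gives the bound.
    rcases le_total (K ε) (K η) with hK | hK
    · calc affineEnvelope K (a + b) ≤ ε + K ε * (a + b) := affineEnvelope_le K hε _
        _ = ε + K ε * a + K ε * b := by ring
        _ ≤ ε + K ε * a + (η + K η * b) := by
            gcongr
            exact le_add_of_nonneg_of_le zero_le (by gcongr)
    · calc affineEnvelope K (a + b) ≤ η + K η * (a + b) := affineEnvelope_le K hη _
        _ = K η * a + (η + K η * b) := by ring
        _ ≤ ε + K ε * a + (η + K η * b) := by
            gcongr
            exact le_add_of_nonneg_of_le zero_le (by gcongr)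

lemma AlmostLipschitzOn.exists_extension (hf : AlmostLipschitzOn f s) :
    ∃ g : X → ℝ, AlmostLipschitzOn g univ ∧ EqOn f g s := by
  choose! K hK using fun (ε : ℝ≥0) (hε : 0 < ε) => hf ε hε
  obtain ⟨g, hg, hfg⟩ := (isSubadditiveModulus_affineEnvelope K).exists_extension
    fun x hx y hy => le_affineEnvelope (a := nndist (f x) (f y)) fun ε hε => hK ε hε x hx y hy
  refine ⟨g, fun ε hε => ⟨K ε.toNNReal, fun x _ y _ => (hg x y).trans ?_⟩, hfg⟩
  simpa only [NNReal.coe_add, NNReal.coe_mul, coe_nndist, Real.coe_toNNReal ε hε.le] using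
    NNReal.coe_le_coe.2 (affineEnvelope_le K (Real.toNNReal_pos.2 hε) (nndist x y))

end Extension

section AlmostMengerConvex

/-- A pseudometric space is almost Menger convex if any splitting `a + b` of a number larger than
the distance of two points is realized by an intermediate point. Length spaces have this property,
but no path need exist in general: `ℚ` has it too. -/
def AlmostMengerConvex (X : Type*) [PseudoMetricSpace X] : Prop :=
  ∀ ⦃x y : X⦄ ⦃a b : ℝ⦄, 0 < a → 0 < b → dist x y < a + b → ∃ z, dist x z < a ∧ dist z y < b

variable {X Z : Type*} [PseudoMetricSpace X] [PseudoMetricSpace Z]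

lemma AlmostMengerConvex.dist_le_of_dist_lt_succ_mul (hX : AlmostMengerConvex X) {f : X → Z}
    {δ ε : ℝ} (hδ : 0 < δ) (hf : ∀ x y, dist x y < δ → dist (f x) (f y) ≤ ε) (n : ℕ) {x y : X}
    (hxy : dist x y < (n + 1) * δ) : dist (f x) (f y) ≤ (n + 1) * ε := by
  induction n generalizing y with
  | zero => simpa using hf x y (by simpa using hxy)
  | succ n ih =>
    push_cast at hxy ⊢
    obtain ⟨z, hxz, hzy⟩ : ∃ z, dist x z < (n + 1) * δ ∧ dist z y < δ :=
      hX (by positivity) hδ (by linarith)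
    calc dist (f x) (f y) ≤ dist (f x) (f z) + dist (f z) (f y) := dist_triangle _ _ _
      _ ≤ (n + 1) * ε + ε := add_le_add (ih hxz) (hf z y hzy)
      _ = (n + 1 + 1) * ε := by ring

lemma AlmostMengerConvex.almostLipschitzOn_univ (hX : AlmostMengerConvex X) {f : X → Z}
    (hf : UniformContinuous f) : AlmostLipschitzOn f univ := by
  intro ε hε
  obtain ⟨δ, hδ, hfδ⟩ := Metric.uniformContinuous_iff.1 hf ε hε
  refine ⟨(ε / δ).toNNReal, fun x _ y _ => ?_⟩
  have hlt : dist x y < (⌊dist x y / δ⌋₊ + 1) * δ := (div_lt_iff₀ hδ).1 (Nat.lt_floor_add_one _)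
  rw [Real.coe_toNNReal _ (by positivity)]
  calc dist (f x) (f y) ≤ (⌊dist x y / δ⌋₊ + 1) * ε :=
        hX.dist_le_of_dist_lt_succ_mul hδ (fun _ _ h => (hfδ h).le) _ hlt
    _ ≤ (dist x y / δ + 1) * ε := by
        gcongr
        exact Nat.floor_le (by positivity)
    _ = ε + ε / δ * dist x y := by ring

lemma AlmostMengerConvex.almostLipschitzOn_iff_exists_uniformContinuous
    (hX : AlmostMengerConvex X) {f : X → ℝ} {s : Set X} :
    AlmostLipschitzOn f s ↔ ∃ g : X → ℝ, UniformContinuous g ∧ EqOn g f s := by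
  constructor
  · intro hf
    obtain ⟨g, hg, hfg⟩ := hf.exists_extension
    exact ⟨g, uniformContinuousOn_univ.1 hg.uniformContinuousOn, hfg.symm⟩
  · rintro ⟨g, hg, hgf⟩
    exact ((hX.almostLipschitzOn_univ hg).mono (subset_univ s)).congr hgf

end AlmostMengerConvex

section LengthSpace

variable {X : Type*} [MetricSpace X]

lemma edist_add_edist_le_pathLength {x y : X} (γ : Path x y) (t : unitInterval) :
    edist x (γ t) + edist (γ t) y ≤ pathLength γ :=
  calc edist x (γ t) + edist (γ t) y = edist (γ 0) (γ t) + edist (γ t) (γ 1) := by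
        rw [γ.source, γ.target]
    _ ≤ eVariationOn γ (Iic t) + eVariationOn γ (Ici t) :=
        add_le_add (eVariationOn.edist_le γ unitInterval.nonneg' self_mem_Iic)
          (eVariationOn.edist_le γ self_mem_Ici unitInterval.le_one')
    _ ≤ eVariationOn γ (Iic t ∪ Ici t) :=
        eVariationOn.add_le_union γ fun _ hu _ hv => le_trans hu hv
    _ ≤ pathLength γ := eVariationOn.mono γ (subset_univ _)

lemma IsLengthSpace.almostMengerConvex (hX : IsLengthSpace X) : AlmostMengerConvex X := by
  intro x y a b ha hb hxy
  obtain ⟨γ, hγ⟩ : ∃ γ : Path x y, pathLength γ < ENNReal.ofReal (a + b) :=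
    iInf_lt_iff.1 (hX x y ▸ edist_lt_ofReal.2 hxy)
  -- The times close to `x` and those close to `y` are open and cover the connected interval.
  obtain ⟨t, hxt, hty⟩ : ({t | edist x (γ t) < ENNReal.ofReal a} ∩
      {t | edist (γ t) y < ENNReal.ofReal b}).Nonempty := by
    refine nonempty_inter (isOpen_lt (by fun_prop) continuous_const)
      (isOpen_lt (by fun_prop) continuous_const) (eq_univ_of_forall fun t => ?_)
      ⟨0, by simpa using ha⟩ ⟨1, by simpa using hb⟩
    by_contra hfar
    simp only [mem_union, mem_ofPred_eq, not_or, not_lt] at hfar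
    refine hγ.not_ge ?_
    calc ENNReal.ofReal (a + b) = ENNReal.ofReal a + ENNReal.ofReal b :=
          ENNReal.ofReal_add ha.le hb.le
      _ ≤ edist x (γ t) + edist (γ t) y := add_le_add hfar.1 hfar.2
      _ ≤ pathLength γ := edist_add_edist_le_pathLength γ t
  exact ⟨γ t, edist_lt_ofReal.1 hxt, edist_lt_ofReal.1 hty⟩

end LengthSpace

theorem stmt10_general {X : Type*} [PseudoMetricSpace X] (hX : AlmostMengerConvex X)
    (Y : Set X) (F : X → ℝ) :
    ((UniformContinuousOn F Y ∧
        ∃ M : ℝ, ∀ y ∈ Y, ∀ y' ∈ Y, (F y - F y') / max 1 (dist y y') ≤ M) ↔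
      ∃ G : X → ℝ, UniformContinuous G ∧ Set.EqOn G F Y) ∧
    ((∃ G : X → ℝ, UniformContinuous G ∧ Set.EqOn G F Y) ↔
      ∃ Fseq : ℕ → X → ℝ,
        (∀ m : ℕ, ∃ K : NNReal, LipschitzOnWith K (Fseq m) Y) ∧
        TendstoUniformlyOn Fseq F Filter.atTop Y) :=
  have hext := hX.almostLipschitzOn_iff_exists_uniformContinuous
  ⟨almostLipschitzOn_iff_uniformContinuousOn_and_sub_div_le.symm.trans hext,
    hext.symm.trans almostLipschitzOn_iff_exists_tendstoUniformlyOn⟩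

/-- For `F` defined on a nonempty subset `Y` of a length space `X`, the following are
equivalent: (1) `F` is uniformly continuous on `Y` and
`sup {(F y - F y') / max 1 (d(y,y'))} < ∞`; (2) `F` extends to a uniformly continuous
function on `X`; (3) `F` is a uniform limit on `Y` of Lipschitz functions. -/
theorem stmt10 {X : Type*} [MetricSpace X] (hX : IsLengthSpace X)
    (Y : Set X) (hY : Y.Nonempty) (F : X → ℝ) :
    ((UniformContinuousOn F Y ∧
        ∃ M : ℝ, ∀ y ∈ Y, ∀ y' ∈ Y, (F y - F y') / max 1 (dist y y') ≤ M) ↔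
      ∃ G : X → ℝ, UniformContinuous G ∧ Set.EqOn G F Y) ∧
    ((∃ G : X → ℝ, UniformContinuous G ∧ Set.EqOn G F Y) ↔
      ∃ Fseq : ℕ → X → ℝ,
        (∀ m : ℕ, ∃ K : NNReal, LipschitzOnWith K (Fseq m) Y) ∧
        TendstoUniformlyOn Fseq F Filter.atTop Y) :=
  stmt10_general hX.almostMengerConvex Y F

end
end
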